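/- (Maschke's Theorem for Doi-Hopf modules.) Let (H,A,C) be a Doi-Hopf datum admitting a total A-integral γ. Let M and N be right-left Doi-Hopf modules and u : M → N a map that is right A-linear and left C-colinear. (1) If u has a retraction that is right A-linear, then u has a retraction that is both right A-linear and left C-colinear. (2) If u has a section that is right A-linear, then u has a section that is both right A-linear and left C-colinear. -/

import Mathlib

/-!
The idea is the averaging argument behind Maschke's theorem. Write `θ` for the uncurried integral.
For every Doi-Hopf module `M` the map
`ν_M : C ⊗ M → M`, `c ⊗ m ↦ Σ m_{<0>} · θ(c ⊗ m_{<-1>})` (`DoiHopfDatum.nuMap`) is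

* right `A`-linear for the action `actCM` on `C ⊗ M`, by condition (a) (`nuMap_actCM`);
* left `C`-colinear for the coaction `Δ ⊗ id` on `C ⊗ M`, by condition (b) (`cρ_nuMap`);
* a left inverse of the coaction `ρ_M`, by totality (`nuMap_cρ`);
* natural in morphisms of Doi-Hopf modules (`nuMap_natural`).

Given an `A`-linear `v : N → M`, the average `ν_M ∘ (id ⊗ v) ∘ ρ_N` is therefore `A`-linear and
`C`-colinear, and it is a retraction (section) of `u` as soon as `v` is one.
-/

open TensorProduct

noncomputable section

/-- A Doi-Hopf datum `(H, A, C)`: `H` is a `k`-bialgebra, `A` is a left `H`-comodule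
algebra (with coaction `ρ`), and `C` is a right `H`-module coalgebra (with action `act`). -/
structure DoiHopfDatum (k H A C : Type*) [CommRing k] [Ring H] [Bialgebra k H]
    [Ring A] [Algebra k A] [AddCommGroup C] [Module k C] [Coalgebra k C] where
  /-- the coaction `ρ_A : A → H ⊗ A`, `ρ a = Σ a_{<-1>} ⊗ a_{<0>}` -/
  ρ : A →ₗ[k] H ⊗[k] A
  ρ_coassoc : ∀ a : A,
    (TensorProduct.assoc k H H A)
        ((TensorProduct.map (Coalgebra.comul (R := k)) LinearMap.id) (ρ a))
      = (TensorProduct.map LinearMap.id ρ) (ρ a)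
  ρ_counit : ∀ a : A,
    (TensorProduct.lid k A)
        ((TensorProduct.map (Coalgebra.counit (R := k)) LinearMap.id) (ρ a)) = a
  ρ_mul : ∀ a b : A, ρ (a * b) = ρ a * ρ b
  ρ_one : ρ 1 = 1
  /-- the right `H`-action on `C`, written `act c h = c · h` -/
  act : C →ₗ[k] H →ₗ[k] C
  act_one : ∀ c : C, act c 1 = c
  act_mul : ∀ (c : C) (g h : H), act (act c g) h = act c (g * h)
  comul_act : ∀ (c : C) (h : H),
    Coalgebra.comul (R := k) (act c h)
      = (TensorProduct.map (TensorProduct.lift act) (TensorProduct.lift act))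
          ((TensorProduct.tensorTensorTensorComm k C C H H)
            (Coalgebra.comul (R := k) c ⊗ₜ[k] Coalgebra.comul (R := k) h))
  counit_act : ∀ (c : C) (h : H),
    Coalgebra.counit (R := k) (act c h)
      = Coalgebra.counit (R := k) c * Coalgebra.counit (R := k) h

namespace DoiHopfDatum

variable {k H A C : Type*} [CommRing k] [Ring H] [Bialgebra k H]
    [Ring A] [Algebra k A] [AddCommGroup C] [Module k C] [Coalgebra k C]
variable (D : DoiHopfDatum k H A C)

/-- The action `C ⊗ H → C` as a linear map on the tensor product. -/
def actL : C ⊗[k] H →ₗ[k] C := TensorProduct.lift D.act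

/-- The iterated coaction `a ↦ Σ (a_{<-2>} ⊗ a_{<-1>}) ⊗ a_{<0>}`. -/
def ρ2 : A →ₗ[k] (H ⊗[k] H) ⊗[k] A :=
  (TensorProduct.assoc k H H A).symm.toLinearMap ∘ₗ
    (TensorProduct.map LinearMap.id D.ρ) ∘ₗ D.ρ

/-- The simultaneous action of `H ⊗ H` on `C ⊗ C`. -/
def act2 : (C ⊗[k] C) ⊗[k] (H ⊗[k] H) →ₗ[k] C ⊗[k] C :=
  (TensorProduct.map D.actL D.actL) ∘ₗ
    (TensorProduct.tensorTensorTensorComm k C C H H).toLinearMap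

/-- The right `A`-action on `C ⊗ A`: `(c ⊗ b) · a = Σ c·a_{<-1>} ⊗ b·a_{<0>}`. -/
def rActCA : (C ⊗[k] A) ⊗[k] A →ₗ[k] C ⊗[k] A :=
  (TensorProduct.map D.actL (LinearMap.mul' k A)) ∘ₗ
    (TensorProduct.tensorTensorTensorComm k C A H A).toLinearMap ∘ₗ
    (TensorProduct.map LinearMap.id D.ρ)

/-- The right-hand side of condition (a) of `V₃`:
`(c ⊗ d) ⊗ a ↦ Σ a_{<0>} * θ(c·a_{<-2>} ⊗ d·a_{<-1>})`. -/
def V3aRHS (θ : C ⊗[k] C →ₗ[k] A) : (C ⊗[k] C) ⊗[k] A →ₗ[k] A :=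
  (LinearMap.mul' k A) ∘ₗ (TensorProduct.comm k A A).toLinearMap ∘ₗ
    (TensorProduct.map θ LinearMap.id) ∘ₗ
    (TensorProduct.map D.act2 LinearMap.id) ∘ₗ
    (TensorProduct.assoc k (C ⊗[k] C) (H ⊗[k] H) A).symm.toLinearMap ∘ₗ
    (TensorProduct.map LinearMap.id D.ρ2)

/-- The left-hand side of condition (b) of `V₃`: `c ⊗ d ↦ Σ c_(1) ⊗ θ(c_(2) ⊗ d)`. -/
def V3bLHS (_D : DoiHopfDatum k H A C) (θ : C ⊗[k] C →ₗ[k] A) : C ⊗[k] C →ₗ[k] C ⊗[k] A :=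
  (TensorProduct.map LinearMap.id θ) ∘ₗ
    (TensorProduct.assoc k C C C).toLinearMap ∘ₗ
    (TensorProduct.map (Coalgebra.comul (R := k)) LinearMap.id)

/-- The right-hand side of condition (b) of `V₃`:
`c ⊗ d ↦ Σ d_(2)·θ(c ⊗ d_(1))_{<-1>} ⊗ θ(c ⊗ d_(1))_{<0>}`. -/
def V3bRHS (θ : C ⊗[k] C →ₗ[k] A) : C ⊗[k] C →ₗ[k] C ⊗[k] A :=
  (TensorProduct.map D.actL LinearMap.id) ∘ₗ
    (TensorProduct.assoc k C H A).symm.toLinearMap ∘ₗ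
    (TensorProduct.comm k (H ⊗[k] A) C).toLinearMap ∘ₗ
    (TensorProduct.map D.ρ LinearMap.id) ∘ₗ
    (TensorProduct.map θ LinearMap.id) ∘ₗ
    (TensorProduct.assoc k C C C).symm.toLinearMap ∘ₗ
    (TensorProduct.map LinearMap.id (Coalgebra.comul (R := k)))

/-- `θ : C ⊗ C → A` belongs to `V₃`. -/
def IsV3 (θ : C ⊗[k] C →ₗ[k] A) : Prop :=
  (∀ (c d : C) (a : A), θ (c ⊗ₜ[k] d) * a = D.V3aRHS θ ((c ⊗ₜ[k] d) ⊗ₜ[k] a)) ∧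
    D.V3bLHS θ = D.V3bRHS θ

/-- `θ` is normalized: `Σ θ(c_(1) ⊗ c_(2)) = ε(c)1_A`. -/
def IsNormalizedV3 (_D : DoiHopfDatum k H A C) (θ : C ⊗[k] C →ₗ[k] A) : Prop :=
  ∀ c : C, θ (Coalgebra.comul (R := k) c)
    = algebraMap k A (Coalgebra.counit (R := k) c)

/-- An `A`-integral `γ : C → Hom(C,A)` for the Doi-Hopf datum: its uncurried form
lies in `V₃`. -/
def IsAIntegral (γ : C →ₗ[k] (C →ₗ[k] A)) : Prop :=
  D.IsV3 (TensorProduct.lift γ)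

/-- A total `A`-integral: a normalized `A`-integral. -/
def IsTotalAIntegral (γ : C →ₗ[k] (C →ₗ[k] A)) : Prop :=
  D.IsAIntegral γ ∧ D.IsNormalizedV3 (TensorProduct.lift γ)

end DoiHopfDatum

/-- A right-left Doi-Hopf module over the Doi-Hopf datum `D`: a right `A`-module and
left `C`-comodule `M` satisfying `ρ_M(m·a) = Σ m_{<-1>}·a_{<-1>} ⊗ m_{<0>}·a_{<0>}`. -/
structure DHModule {k H A C : Type*} [CommRing k] [Ring H] [Bialgebra k H]
    [Ring A] [Algebra k A] [AddCommGroup C] [Module k C] [Coalgebra k C]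
    (D : DoiHopfDatum k H A C) (M : Type*) [AddCommGroup M] [Module k M] where
  /-- the right `A`-action on `M` -/
  sm : M →ₗ[k] A →ₗ[k] M
  sm_one : ∀ m : M, sm m 1 = m
  sm_mul : ∀ (m : M) (a b : A), sm (sm m a) b = sm m (a * b)
  /-- the left `C`-coaction `ρ_M : M → C ⊗ M` -/
  cρ : M →ₗ[k] C ⊗[k] M
  cρ_coassoc : ∀ m : M,
    (TensorProduct.assoc k C C M)
        ((TensorProduct.map (Coalgebra.comul (R := k)) LinearMap.id) (cρ m))
      = (TensorProduct.map LinearMap.id cρ) (cρ m)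
  cρ_counit : ∀ m : M,
    (TensorProduct.lid k M)
        ((TensorProduct.map (Coalgebra.counit (R := k)) LinearMap.id) (cρ m)) = m
  compat : ∀ (m : M) (a : A),
    cρ (sm m a)
      = (TensorProduct.map D.actL (TensorProduct.lift sm))
          ((TensorProduct.tensorTensorTensorComm k C M H A)
            (cρ m ⊗ₜ[k] D.ρ a))

namespace DoiHopfDatum

variable {k H A C : Type*} [CommRing k] [Ring H] [Bialgebra k H]
    [Ring A] [Algebra k A] [AddCommGroup C] [Module k C] [Coalgebra k C]
variable (D : DoiHopfDatum k H A C)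

/-- The natural transformation attached to `θ : C ⊗ C → A`:
`ν_M (c ⊗ m) = Σ m_{<0>} · θ(c ⊗ m_{<-1>})`. -/
def nuMap (θ : C ⊗[k] C →ₗ[k] A) {M : Type*} [AddCommGroup M] [Module k M]
    (DM : DHModule D M) : C ⊗[k] M →ₗ[k] M :=
  (TensorProduct.lift DM.sm) ∘ₗ (TensorProduct.comm k A M).toLinearMap ∘ₗ
    (TensorProduct.map θ LinearMap.id) ∘ₗ
    (TensorProduct.assoc k C C M).symm.toLinearMap ∘ₗ
    (TensorProduct.map LinearMap.id DM.cρ)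

/-- The right `A`-action on `C ⊗ M`: `(c ⊗ m) · a = Σ c·a_{<-1>} ⊗ m·a_{<0>}`. -/
def actCM {M : Type*} [AddCommGroup M] [Module k M] (DM : DHModule D M) :
    (C ⊗[k] M) ⊗[k] A →ₗ[k] C ⊗[k] M :=
  (TensorProduct.map D.actL (TensorProduct.lift DM.sm)) ∘ₗ
    (TensorProduct.tensorTensorTensorComm k C M H A).toLinearMap ∘ₗ
    (TensorProduct.map LinearMap.id D.ρ)

end DoiHopfDatum

namespace DoiHopfDatum

section Averaging

variable {k H A C : Type*} [CommRing k] [Ring H] [Bialgebra k H]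
    [Ring A] [Algebra k A] [AddCommGroup C] [Module k C] [Coalgebra k C]
    {D : DoiHopfDatum k H A C} {θ : C ⊗[k] C →ₗ[k] A}
    {M N : Type*} [AddCommGroup M] [Module k M] [AddCommGroup N] [Module k N]
    (DM : DHModule D M) (DN : DHModule D N)

theorem nuMap_actCM (hθ : D.IsV3 θ) (x : C ⊗[k] M) (a : A) :
    D.nuMap θ DM (D.actCM DM (x ⊗ₜ[k] a)) = DM.sm (D.nuMap θ DM x) a := by
  induction x with
  | zero => simp
  | add x y hx hy => simp only [add_tmul, map_add, hx, hy, LinearMap.add_apply]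
  | tmul c m =>
    -- Expand `ρ_M m` and `ρ a` into pure tensors and compare term by term with condition (a).
    obtain ⟨S, hS⟩ := TensorProduct.exists_finset (DM.cρ m)
    obtain ⟨R, hR⟩ := TensorProduct.exists_finset (D.ρ a)
    have ha (d : C) := hθ.1 c d a
    simp only [V3aRHS, ρ2, act2, LinearMap.comp_apply, LinearEquiv.coe_coe, map_tmul,
      LinearMap.id_apply, hR, map_sum, tmul_sum] at ha
    simp only [nuMap, actCM, LinearMap.comp_apply, LinearEquiv.coe_coe, map_tmul,
      LinearMap.id_apply, hR, hS, tmul_sum, map_sum, LinearMap.sum_apply,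
      tensorTensorTensorComm_tmul, lift.tmul, assoc_symm_tmul, comm_tmul, DM.sm_mul, ha,
      DM.compat, sum_tmul]
    rw [Finset.sum_comm]
    refine Finset.sum_congr rfl fun j _ => Finset.sum_congr rfl fun i _ => ?_
    generalize D.ρ _ = r
    induction r with
    | zero => simp
    | add x y hx hy => simp only [tmul_add, map_add, hx, hy]
    | tmul g b => simp [DM.sm_mul]

theorem cρ_nuMap (hθ : D.IsV3 θ) (x : C ⊗[k] M) :
    DM.cρ (D.nuMap θ DM x) = map LinearMap.id (D.nuMap θ DM)
      (TensorProduct.assoc k C C M (map (Coalgebra.comul (R := k)) LinearMap.id x)) := by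
  induction x with
  | zero => simp
  | add x y hx hy => simp only [map_add, hx, hy]
  | tmul c m =>
    -- `T (d ⊗ t)` is `t` acted on by `ρ (θ (c ⊗ d))`; coassociativity is used under `T`.
    let T : C ⊗[k] (C ⊗[k] M) →ₗ[k] C ⊗[k] M :=
      map D.actL (lift DM.sm) ∘ₗ (tensorTensorTensorComm k C M H A).toLinearMap ∘ₗ
        (TensorProduct.comm k (H ⊗[k] A) (C ⊗[k] M)).toLinearMap ∘ₗ
        map (D.ρ ∘ₗ θ ∘ₗ TensorProduct.mk k C C c) LinearMap.id
    have hT (d : C) (t : C ⊗[k] M) : T (d ⊗ₜ t) = map D.actL (lift DM.sm)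
        (tensorTensorTensorComm k C M H A (t ⊗ₜ D.ρ (θ (c ⊗ₜ d)))) := rfl
    have h1 (t : C ⊗[k] M) :
        DM.cρ (lift DM.sm (TensorProduct.comm k A M (map θ LinearMap.id
          ((TensorProduct.assoc k C C M).symm (c ⊗ₜ t))))) = T (map LinearMap.id DM.cρ t) := by
      induction t with
      | zero => simp
      | add x y hx hy => simp only [tmul_add, map_add, hx, hy]
      | tmul d m => simp [hT, DM.compat]
    have h2 (d : C) (m : M) :
        T (TensorProduct.assoc k C C M (Coalgebra.comul (R := k) d ⊗ₜ m))
          = map LinearMap.id (DM.sm m) (D.V3bRHS θ (c ⊗ₜ d)) := by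
      simp only [V3bRHS, LinearMap.comp_apply, LinearEquiv.coe_coe, map_tmul, LinearMap.id_apply]
      generalize Coalgebra.comul (R := k) d = w
      induction w with
      | zero => simp
      | add x y hx hy => simp only [tmul_add, add_tmul, map_add, hx, hy]
      | tmul d e =>
        simp only [assoc_tmul, hT, assoc_symm_tmul, map_tmul, LinearMap.id_apply, comm_tmul]
        generalize D.ρ (θ (c ⊗ₜ d)) = r
        induction r with
        | zero => simp
        | add x y hx hy => simp only [tmul_add, map_add, hx, hy]
        | tmul h a => simp
    have h3 (t : C ⊗[k] M) :
        T (TensorProduct.assoc k C C M (map (Coalgebra.comul (R := k)) LinearMap.id t))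
          = map LinearMap.id (lift DM.sm ∘ₗ (TensorProduct.comm k A M).toLinearMap ∘ₗ
              map θ LinearMap.id ∘ₗ (TensorProduct.assoc k C C M).symm.toLinearMap)
            (TensorProduct.assoc k C C _ (Coalgebra.comul (R := k) c ⊗ₜ t)) := by
      induction t with
      | zero => simp
      | add x y hx hy => simp only [tmul_add, map_add, hx, hy]
      | tmul d m =>
        rw [map_tmul, LinearMap.id_apply, h2, ← hθ.2]
        simp only [V3bLHS, LinearMap.comp_apply, LinearEquiv.coe_coe, map_tmul, LinearMap.id_apply]
        generalize Coalgebra.comul (R := k) c = w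
        induction w with
        | zero => simp
        | add x y hx hy => simp only [add_tmul, map_add, hx, hy]
        | tmul d e => simp
    simp only [nuMap, LinearMap.comp_apply, LinearEquiv.coe_coe, map_tmul, LinearMap.id_apply]
    rw [h1, ← DM.cρ_coassoc, h3]
    generalize Coalgebra.comul (R := k) c = w
    induction w with
    | zero => simp
    | add x y hx hy => simp only [add_tmul, map_add, hx, hy]
    | tmul d e => simp

theorem nuMap_cρ (hθ : D.IsNormalizedV3 θ) (m : M) : D.nuMap θ DM (DM.cρ m) = m := by
  simp only [nuMap, LinearMap.comp_apply, LinearEquiv.coe_coe]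
  rw [← DM.cρ_coassoc, LinearEquiv.symm_apply_apply]
  conv_rhs => rw [← DM.cρ_counit m]
  generalize DM.cρ m = t
  induction t with
  | zero => simp
  | add x y hx hy => simp only [map_add, hx, hy]
  | tmul c m => simp [hθ c, Algebra.algebraMap_eq_smul_one, DM.sm_one]

theorem nuMap_natural (u : M →ₗ[k] N)
    (huA : ∀ (m : M) (a : A), u (DM.sm m a) = DN.sm (u m) a)
    (huC : DN.cρ ∘ₗ u = map LinearMap.id u ∘ₗ DM.cρ) (x : C ⊗[k] M) :
    u (D.nuMap θ DM x) = D.nuMap θ DN (map LinearMap.id u x) := by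
  induction x with
  | zero => simp
  | add x y hx hy => simp only [map_add, hx, hy]
  | tmul c m =>
    have h := LinearMap.congr_fun huC m
    simp only [LinearMap.comp_apply] at h
    simp only [nuMap, LinearMap.comp_apply, LinearEquiv.coe_coe, map_tmul, LinearMap.id_apply, h]
    generalize DM.cρ m = t
    induction t with
    | zero => simp
    | add x y hx hy => simp only [tmul_add, map_add, hx, hy]
    | tmul d m => simp [huA]

/-- The average `ν_M ∘ (id ⊗ v) ∘ ρ_N` of a linear map `v : N → M`. -/
def average (θ : C ⊗[k] C →ₗ[k] A) (v : N →ₗ[k] M) : N →ₗ[k] M :=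
  D.nuMap θ DM ∘ₗ map LinearMap.id v ∘ₗ DN.cρ

theorem average_sm (hθ : D.IsV3 θ) (v : N →ₗ[k] M)
    (hv : ∀ (n : N) (a : A), v (DN.sm n a) = DM.sm (v n) a) (n : N) (a : A) :
    average DM DN θ v (DN.sm n a) = DM.sm (average DM DN θ v n) a := by
  have h (t : C ⊗[k] N) (r : H ⊗[k] A) :
      map LinearMap.id v (map D.actL (lift DN.sm) (tensorTensorTensorComm k C N H A (t ⊗ₜ r)))
        = map D.actL (lift DM.sm)
            (tensorTensorTensorComm k C M H A (map LinearMap.id v t ⊗ₜ r)) := by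
    induction t with
    | zero => simp
    | add x y hx hy => simp only [add_tmul, map_add, hx, hy]
    | tmul c n =>
      induction r with
      | zero => simp
      | add x y hx hy => simp only [tmul_add, map_add, hx, hy]
      | tmul b a => simp [hv]
  simp only [average, LinearMap.comp_apply]
  rw [← nuMap_actCM DM hθ, DN.compat, h]
  simp [actCM]

theorem cρ_average (hθ : D.IsV3 θ) (v : N →ₗ[k] M) :
    DM.cρ ∘ₗ average DM DN θ v = map LinearMap.id (average DM DN θ v) ∘ₗ DN.cρ := by
  ext n
  simp only [average, LinearMap.comp_apply]
  have h (t : C ⊗[k] N) :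
      TensorProduct.assoc k C C M
          (map (Coalgebra.comul (R := k)) LinearMap.id (map LinearMap.id v t))
        = map LinearMap.id (map LinearMap.id v) (TensorProduct.assoc k C C N
            (map (Coalgebra.comul (R := k)) LinearMap.id t)) := by
    induction t with
    | zero => simp
    | add x y hx hy => simp only [map_add, hx, hy]
    | tmul c n =>
      simp only [map_tmul, LinearMap.id_apply]
      generalize Coalgebra.comul (R := k) c = w
      induction w with
      | zero => simp
      | add x y hx hy => simp only [add_tmul, map_add, hx, hy]
      | tmul d e => simp
  rw [cρ_nuMap DM hθ, h, DN.cρ_coassoc]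
  generalize DN.cρ n = t
  induction t with
  | zero => simp
  | add x y hx hy => simp only [map_add, hx, hy]
  | tmul c n => simp

end Averaging

end DoiHopfDatum

/-- Maschke's Theorem for Doi-Hopf modules: if the Doi-Hopf datum `(H,A,C)`
admits a total `A`-integral `γ`, and `u : M → N` is a morphism of Doi-Hopf modules
(right `A`-linear and left `C`-colinear), then: (1) if `u` has a right `A`-linear
retraction, it has a retraction that is both right `A`-linear and left `C`-colinear;
(2) if `u` has a right `A`-linear section, it has a section that is both right
`A`-linear and left `C`-colinear. -/
theorem maschke_doi_hopf
    {k H A C : Type*} [CommRing k] [Ring H] [Bialgebra k H]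
    [Ring A] [Algebra k A] [AddCommGroup C] [Module k C] [Coalgebra k C]
    (D : DoiHopfDatum k H A C) (γ : C →ₗ[k] (C →ₗ[k] A))
    (hγ : D.IsTotalAIntegral γ)
    {M N : Type*} [AddCommGroup M] [Module k M] [AddCommGroup N] [Module k N]
    (DM : DHModule D M) (DN : DHModule D N)
    (u : M →ₗ[k] N)
    (huA : ∀ (m : M) (a : A), u (DM.sm m a) = DN.sm (u m) a)
    (huC : DN.cρ ∘ₗ u = (TensorProduct.map LinearMap.id u) ∘ₗ DM.cρ) :
    ((∃ v : N →ₗ[k] M, (∀ (n : N) (a : A), v (DN.sm n a) = DM.sm (v n) a) ∧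
        v ∘ₗ u = LinearMap.id) →
      ∃ v : N →ₗ[k] M, (∀ (n : N) (a : A), v (DN.sm n a) = DM.sm (v n) a) ∧
        (DM.cρ ∘ₗ v = (TensorProduct.map LinearMap.id v) ∘ₗ DN.cρ) ∧
        v ∘ₗ u = LinearMap.id) ∧
    ((∃ v : N →ₗ[k] M, (∀ (n : N) (a : A), v (DN.sm n a) = DM.sm (v n) a) ∧
        u ∘ₗ v = LinearMap.id) →
      ∃ v : N →ₗ[k] M, (∀ (n : N) (a : A), v (DN.sm n a) = DM.sm (v n) a) ∧
        (DM.cρ ∘ₗ v = (TensorProduct.map LinearMap.id v) ∘ₗ DN.cρ) ∧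
        u ∘ₗ v = LinearMap.id) := by
  obtain ⟨hV, hnorm⟩ := hγ
  have huC' (m : M) : DN.cρ (u m) = TensorProduct.map LinearMap.id u (DM.cρ m) :=
    LinearMap.congr_fun huC m
  refine ⟨?_, ?_⟩
  · rintro ⟨v, hvA, hvu⟩
    refine ⟨DoiHopfDatum.average DM DN (TensorProduct.lift γ) v,
      DoiHopfDatum.average_sm DM DN hV v hvA, DoiHopfDatum.cρ_average DM DN hV v, ?_⟩
    ext m
    simp only [DoiHopfDatum.average, LinearMap.comp_apply, huC', LinearMap.id_apply]
    rw [← LinearMap.comp_apply (TensorProduct.map _ v), ← TensorProduct.map_comp, hvu]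
    simpa using DoiHopfDatum.nuMap_cρ DM hnorm m
  · rintro ⟨v, hvA, huv⟩
    refine ⟨DoiHopfDatum.average DM DN (TensorProduct.lift γ) v,
      DoiHopfDatum.average_sm DM DN hV v hvA, DoiHopfDatum.cρ_average DM DN hV v, ?_⟩
    ext n
    simp only [DoiHopfDatum.average, LinearMap.comp_apply, LinearMap.id_apply]
    rw [DoiHopfDatum.nuMap_natural DM DN u huA huC,
      ← LinearMap.comp_apply (TensorProduct.map _ u), ← TensorProduct.map_comp, huv]
    simpa using DoiHopfDatum.nuMap_cρ DN hnorm n
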